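/- Let γ ∈ (0,1), H ≥ 1, P_1, ..., P_{H-1} row-stochastic matrices, and φ ≥ 0 a nonnegative vector. Then the entrywise square of β := (I + ∑_{h=1}^{H-1} γ^h ∏_{k=1}^h P_k) √φ satisfies |β|² ≤ (1/(1-γ)) ∑_{h=0}^{H-1} γ^h ∏_{k=1}^h P_k φ entrywise, where √φ is the entrywise square root. -/

import Mathlib

theorem weighted_cs_aux {ι : Type*} (s : Finset ι) (w x : ι → ℝ) (hw : ∀ i ∈ s, 0 ≤ w i) :
    (∑ i ∈ s, w i * x i) ^ 2 ≤ (∑ i ∈ s, w i) * ∑ i ∈ s, w i * x i ^ 2 := by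
  apply Finset.sum_sq_le_sum_mul_sum_of_sq_eq_mul s hw
  · intro i hi
    exact mul_nonneg (hw i hi) (sq_nonneg _)
  · intro i _
    ring

theorem prod_stoch_aux {n : Type*} [Fintype n] [DecidableEq n] (N : ℕ)
    (P : ℕ → Matrix n n ℝ)
    (hP : ∀ k, 1 ≤ k → k ≤ N → (∀ i j, 0 ≤ P k i j) ∧ ∀ i, ∑ j, P k i j = 1)
    (h : ℕ) (hh : h ≤ N) :
    (∀ i j, 0 ≤ ((List.range h).map (fun k => P (k + 1))).prod i j) ∧
      ∀ i, ∑ j, ((List.range h).map (fun k => P (k + 1))).prod i j = 1 := by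
  induction h with
  | zero =>
    constructor
    · intro i j
      simp only [List.range_zero, List.map_nil, List.prod_nil, Matrix.one_apply]
      split_ifs <;> norm_num
    · intro i
      simp [Matrix.one_apply]
  | succ h ih =>
    obtain ⟨h1, h2⟩ := ih (by omega)
    obtain ⟨p1, p2⟩ := hP (h + 1) (by omega) hh
    rw [List.range_succ, List.map_append, List.prod_append]
    simp only [List.map_cons, List.map_nil, List.prod_cons, List.prod_nil, mul_one,
      Matrix.mul_apply]
    constructor
    · intro i j
      exact Finset.sum_nonneg fun k _ => mul_nonneg (h1 i k) (p1 k j)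
    · intro i
      rw [Finset.sum_comm]
      simp only [← Finset.mul_sum, p2, mul_one, h2]

theorem stmt8 {n : Type*} [Fintype n] [DecidableEq n]
    (γ : ℝ) (hγ : 0 < γ ∧ γ < 1) (H : ℕ) (hH : 1 ≤ H)
    (P : ℕ → Matrix n n ℝ)
    (hP : ∀ k, 1 ≤ k → k ≤ H - 1 → (∀ i j, 0 ≤ P k i j) ∧ ∀ i, ∑ j, P k i j = 1)
    (φ : n → ℝ) (hφ : ∀ i, 0 ≤ φ i) :
    ∀ i,
      (Real.sqrt (φ i) + ∑ h ∈ Finset.Icc 1 (H - 1), γ ^ h *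
        (((List.range h).map (fun k => P (k + 1))).prod.mulVec
          (fun j => Real.sqrt (φ j))) i) ^ 2
      ≤ (1 / (1 - γ)) * ∑ h ∈ Finset.range H, γ ^ h *
          (((List.range h).map (fun k => P (k + 1))).prod.mulVec φ) i := by
  intro i
  obtain ⟨h0, h1⟩ := hγ
  set Q : ℕ → Matrix n n ℝ := fun h => ((List.range h).map (fun k => P (k + 1))).prod with hQ
  have hst : ∀ h ∈ Finset.range H, (∀ i j, 0 ≤ Q h i j) ∧ ∀ i, ∑ j, Q h i j = 1 := by
    intro h hh
    have := Finset.mem_range.mp hh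
    exact prod_stoch_aux (H - 1) P hP h (by omega)
  have hL : Real.sqrt (φ i) + ∑ h ∈ Finset.Icc 1 (H - 1), γ ^ h *
        ((Q h).mulVec (fun j => Real.sqrt (φ j))) i
      = ∑ h ∈ Finset.range H, γ ^ h * ((Q h).mulVec (fun j => Real.sqrt (φ j))) i := by
    have e : Finset.range H = insert 0 (Finset.Icc 1 (H - 1)) := by
      ext x
      simp only [Finset.mem_range, Finset.mem_insert, Finset.mem_Icc]
      omega
    rw [e, Finset.sum_insert (by simp)]
    simp [hQ]
  have hJ : ∀ h ∈ Finset.range H,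
      ((Q h).mulVec (fun j => Real.sqrt (φ j)) i) ^ 2 ≤ (Q h).mulVec φ i := by
    intro h hh
    obtain ⟨q1, q2⟩ := hst h hh
    have := weighted_cs_aux Finset.univ (Q h i) (fun j => Real.sqrt (φ j)) (fun j _ => q1 i j)
    simp only [q2, one_mul, Real.sq_sqrt (hφ _)] at this
    exact this
  have hg : ∑ h ∈ Finset.range H, γ ^ h ≤ 1 / (1 - γ) := by
    rw [le_div_iff₀ (by linarith), geom_sum_mul_neg]
    have := pow_pos h0 H
    linarith
  change (Real.sqrt (φ i) + ∑ h ∈ Finset.Icc 1 (H - 1), γ ^ h *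
        ((Q h).mulVec (fun j => Real.sqrt (φ j))) i) ^ 2
      ≤ (1 / (1 - γ)) * ∑ h ∈ Finset.range H, γ ^ h * ((Q h).mulVec φ) i
  rw [hL]
  refine (weighted_cs_aux (Finset.range H) (fun h => γ ^ h) _
    (fun h _ => (pow_pos h0 h).le)).trans ?_
  apply mul_le_mul hg
  · exact Finset.sum_le_sum fun h hh => mul_le_mul_of_nonneg_left (hJ h hh) (pow_pos h0 h).le
  · exact Finset.sum_nonneg fun h _ => mul_nonneg (pow_pos h0 h).le (sq_nonneg _)
  · exact (one_div_pos.mpr (by linarith)).le
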